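/- Let Ω ⊂ ℝⁿ be a bounded domain with smooth boundary, let B be a regular majorant, and let u be a bounded harmonic function in Ω. Then u ∈ Λ_B(Ω) if and only if there is a constant C > 0 such that |∇u(x)| ≤ C·B(δ(x))/δ(x) for every x ∈ Ω, where δ(x) is the Euclidean distance of x to bΩ. -/

import Mathlib

open MeasureTheory Metric Set

noncomputable section

/-- `ℝⁿ` as a Euclidean space. -/
abbrev En (n : ℕ) := EuclideanSpace ℝ (Fin n)

/-- A majorant: a continuous function `B : [0,∞) → [0,∞)` with `B 0 = 0`,
`B` non-decreasing, and `t ↦ B t / t` non-increasing on `(0,∞)`. -/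
def Majorant (B : ℝ → ℝ) : Prop :=
  ContinuousOn B (Ici 0) ∧ (∀ t, 0 ≤ t → 0 ≤ B t) ∧ B 0 = 0 ∧
  (∀ s t, 0 ≤ s → s ≤ t → B s ≤ B t) ∧
  (∀ s t, 0 < s → s ≤ t → B t / t ≤ B s / s)

/-- A regular majorant: a majorant satisfying
`∫₀^δ B t / t dt + δ • ∫_δ^∞ B t / t ^ 2 dt ≤ C * B δ` for all sufficiently small `δ > 0`. -/
def RegularMajorant (B : ℝ → ℝ) : Prop :=
  Majorant B ∧ ∃ C > (0:ℝ), ∃ δ₁ > (0:ℝ), ∀ δ : ℝ, 0 < δ → δ ≤ δ₁ →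
    (∫⁻ t in Ioc (0:ℝ) δ, ENNReal.ofReal (B t / t)) +
      ENNReal.ofReal δ * (∫⁻ t in Ioi δ, ENNReal.ofReal (B t / t ^ 2)) ≤
    ENNReal.ofReal (C * B δ)

/-- `f` is Lipschitz-`B` on `S`, i.e. `f ∈ Λ_B(S)`. -/
def LipschitzB {E : Type*} [NormedAddCommGroup E] (B : ℝ → ℝ) (f : E → ℝ) (S : Set E) : Prop :=
  ∃ C > (0:ℝ), ∀ x ∈ S, ∀ y ∈ S, |f x - f y| ≤ C * B ‖x - y‖

/-- `u` is harmonic on `Ω`: it is `C²` there and its Laplacian vanishes. -/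
def IsHarmonicOn {n : ℕ} (u : En n → ℝ) (Ω : Set (En n)) : Prop :=
  ContDiffOn ℝ 2 u Ω ∧ ∀ x ∈ Ω,
    (∑ i : Fin n, fderiv ℝ (fun y => fderiv ℝ u y (EuclideanSpace.single i 1)) x
      (EuclideanSpace.single i 1)) = 0

/-- `Ω` has `C^∞` smooth boundary: there is a smooth defining function on a
neighbourhood of the boundary with non-vanishing gradient. -/
def HasSmoothBoundary {n : ℕ} (Ω : Set (En n)) : Prop :=
  ∃ (U : Set (En n)) (r : En n → ℝ), IsOpen U ∧ frontier Ω ⊆ U ∧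
    ContDiffOn ℝ (⊤ : ℕ∞) r U ∧ (∀ x ∈ U, (x ∈ Ω ↔ r x < 0)) ∧
    ∀ x ∈ frontier Ω, gradient r x ≠ 0

/-- `ν` is the outward unit normal to `bΩ` at `p`: it is a unit vector and moving
from `p` into `Ω` along `-ν` realizes the distance to the boundary. -/
def IsOutwardUnitNormal {n : ℕ} (Ω : Set (En n)) (p ν : En n) : Prop :=
  ‖ν‖ = 1 ∧ ∀ᶠ t in nhdsWithin (0:ℝ) (Ioi 0),
    p - t • ν ∈ Ω ∧ infDist (p - t • ν) (frontier Ω) = t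

/-!
If `u` is Lipschitz-`B`, it oscillates by at most a multiple of `B(δ x)` on the ball of radius
`δ x / 2` about `x`, and the gradient of a harmonic function at the centre of a ball is controlled
by its oscillation there. The latter estimate needs no Poisson kernel: comparing `u` minus its
reflection with a quadratic barrier on a half ball suffices.

Conversely, integrating the gradient bound handles points that are close to each other compared
with their distance to the boundary. Other pairs are first pushed into `Ω` along a common inward
direction, for a time comparable to `‖x - y‖`; the cost is a multiple of `∫₀^T B t / t dt`, which
regularity bounds by a multiple of `B T`.
-/

open Filter InnerProductSpace Laplacian Topology

open scoped RealInnerProductSpace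

theorem deriv_deriv_nonpos_of_isLocalMax {f : ℝ → ℝ} {a : ℝ} (hmax : IsLocalMax f a)
    (hf : ContinuousAt f a) : deriv (deriv f) a ≤ 0 := by
  by_contra! hpos
  have hmin : IsLocalMin f a := isLocalMin_of_deriv_deriv_pos hpos hmax.deriv_eq_zero hf
  have hconst : f =ᶠ[𝓝 a] fun _ => f a := by
    filter_upwards [hmax, hmin] with s hle hge using le_antisymm hle hge
  have hzero : deriv (deriv f) a = 0 := by
    simpa only [deriv_const'] using hconst.deriv.deriv_eq
  exact hpos.ne' hzero

theorem deriv_deriv_quadratic (α β γ s : ℝ) :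
    deriv (deriv fun t : ℝ => α + β * t + γ * t ^ 2) s = 2 * γ := by
  have hderiv : (deriv fun t : ℝ => α + β * t + γ * t ^ 2) = fun t => β + γ * (2 * t) := by
    funext t
    have h := (((hasDerivAt_id' t).const_mul β).const_add α).fun_add
      ((hasDerivAt_pow 2 t).const_mul γ)
    simpa using h.deriv
  have h := (((hasDerivAt_id' s).const_mul 2).const_mul γ).const_add β
  rw [hderiv, h.deriv]
  ring

theorem le_of_hasDerivWithinAt_of_eventually_sub_le {f g : ℝ → ℝ} {f' a : ℝ}
    (hf : HasDerivWithinAt f f' (Ioi a) a) (hg : ContinuousWithinAt g (Ioi a) a)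
    (hle : ∀ᶠ t in 𝓝[>] a, f t - f a ≤ (t - a) * g t) : f' ≤ g a := by
  have hslope := (hasDerivWithinAt_iff_tendsto_slope' self_notMem_Ioi).1 hf
  refine le_of_tendsto_of_tendsto hslope hg ?_
  filter_upwards [hle, self_mem_nhdsWithin] with t ht hat
  rw [slope_def_field]
  exact (div_le_iff₀' (sub_pos.2 hat)).2 ht

section Lines

variable {E F : Type*} [NormedAddCommGroup E] [NormedSpace ℝ E] [NormedAddCommGroup F]
  [NormedSpace ℝ F]

theorem hasDerivAt_comp_add_smul {f : E → F} {x v : E} {s : ℝ}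
    (hf : DifferentiableAt ℝ f (x + s • v)) :
    HasDerivAt (fun t : ℝ => f (x + t • v)) (fderiv ℝ f (x + s • v) v) s := by
  have hline : HasDerivAt (fun t : ℝ => x + t • v) v s := by
    simpa using ((hasDerivAt_id s).smul_const v).const_add x
  exact hf.hasFDerivAt.comp_hasDerivAt s hline

theorem tendsto_add_smul_nhds_zero (x v : E) :
    Tendsto (fun t : ℝ => x + t • v) (𝓝 0) (𝓝 x) := by
  have hcont : Continuous fun t : ℝ => x + t • v := by fun_prop
  simpa using hcont.tendsto 0

theorem deriv_deriv_comp_add_smul {f : E → F} {x : E} (hf : ContDiffAt ℝ 2 f x) (v : E) :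
    deriv (deriv fun t : ℝ => f (x + t • v)) 0 = iteratedFDeriv ℝ 2 f x ![v, v] := by
  have hfirst : deriv (fun t : ℝ => f (x + t • v)) =ᶠ[𝓝 0]
      fun t => fderiv ℝ f (x + t • v) v := by
    filter_upwards [(tendsto_add_smul_nhds_zero x v).eventually (hf.eventually (by simp))]
      with t ht using (hasDerivAt_comp_add_smul (ht.differentiableAt two_ne_zero)).deriv
  have hdiff : DifferentiableAt ℝ (fderiv ℝ f) (x + (0 : ℝ) • v) := by
    simpa using (hf.fderiv_right (m := 1) (by norm_num)).differentiableAt one_ne_zero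
  have hsecond := (hasDerivAt_comp_add_smul (f := fderiv ℝ f) hdiff).clm_apply
    (hasDerivAt_const (0 : ℝ) v)
  rw [hfirst.deriv_eq, hsecond.deriv, iteratedFDeriv_two_apply]
  simp

end Lines

theorem contDiff_norm_sq_add_inner_sq_add_inner {E : Type*} [NormedAddCommGroup E]
    [InnerProductSpace ℝ E] (a b c : ℝ) (e : E) :
    ContDiff ℝ 2 fun y : E => a * ‖y‖ ^ 2 + b * ⟪e, y⟫ ^ 2 + c * ⟪e, y⟫ := by
  have hinner : ContDiff ℝ 2 fun y : E => ⟪e, y⟫ := contDiff_const.inner ℝ contDiff_id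
  exact ((contDiff_const.mul (contDiff_norm_sq ℝ)).add (contDiff_const.mul (hinner.pow 2))).add
    (contDiff_const.mul hinner)

section Laplacian

variable {E : Type*} [NormedAddCommGroup E] [InnerProductSpace ℝ E] [FiniteDimensional ℝ E]
  {F : Type*} [NormedAddCommGroup F] [NormedSpace ℝ F]

theorem laplacian_eq_sum_deriv_deriv {f : E → F} {x : E} (hf : ContDiffAt ℝ 2 f x) {ι : Type*}
    [Fintype ι] (b : OrthonormalBasis ι ℝ E) :
    Δ f x = ∑ i, deriv (deriv fun t : ℝ => f (x + t • b i)) 0 := by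
  simp only [deriv_deriv_comp_add_smul hf, laplacian_eq_iteratedFDeriv_orthonormalBasis f b]

theorem laplacian_nonpos_of_isLocalMax {f : E → ℝ} {x : E} (hmax : IsLocalMax f x)
    (hf : ContDiffAt ℝ 2 f x) : Δ f x ≤ 0 := by
  rw [laplacian_eq_sum_deriv_deriv hf (stdOrthonormalBasis ℝ E)]
  refine Finset.sum_nonpos fun i _ => ?_
  set v := stdOrthonormalBasis ℝ E i
  have hline := tendsto_add_smul_nhds_zero x v
  refine deriv_deriv_nonpos_of_isLocalMax ?_ ?_
  · have hle : ∀ᶠ t : ℝ in 𝓝 0, f (x + t • v) ≤ f x := hline.eventually hmax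
    simpa [IsLocalMax, IsMaxFilter] using hle
  · exact ContinuousAt.comp (g := f) (f := fun t : ℝ => x + t • v)
      (by simpa using hf.continuousAt) (by simpa [ContinuousAt] using hline)

theorem laplacian_norm_sq_add_inner_sq_add_inner (a b c : ℝ) (e x : E) :
    Δ (fun y : E => a * ‖y‖ ^ 2 + b * ⟪e, y⟫ ^ 2 + c * ⟪e, y⟫) x =
      2 * (a * Module.finrank ℝ E + b * ‖e‖ ^ 2) := by
  set v := stdOrthonormalBasis ℝ E
  have hline : ∀ i, (fun t : ℝ => a * ‖x + t • v i‖ ^ 2 + b * ⟪e, x + t • v i⟫ ^ 2 +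
        c * ⟪e, x + t • v i⟫) =
      fun t => (a * ‖x‖ ^ 2 + b * ⟪e, x⟫ ^ 2 + c * ⟪e, x⟫) +
        (2 * a * ⟪x, v i⟫ + 2 * b * ⟪e, x⟫ * ⟪e, v i⟫ + c * ⟪e, v i⟫) * t +
        (a + b * ⟪e, v i⟫ ^ 2) * t ^ 2 := fun i => by
    funext t
    rw [norm_add_sq_real, norm_smul, v.norm_eq_one, inner_add_right, inner_smul_right,
      inner_smul_right, mul_one, Real.norm_eq_abs, sq_abs]
    ring
  have hsmooth := contDiff_norm_sq_add_inner_sq_add_inner a b c e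
  simp only [laplacian_eq_sum_deriv_deriv hsmooth.contDiffAt v, hline, deriv_deriv_quadratic]
  rw [← Finset.mul_sum, Finset.sum_add_distrib, ← Finset.mul_sum, v.sum_sq_inner_left]
  simp [mul_comm]

theorem laplacian_comp_add_linearIsometryEquiv {f : E → F} (L : E ≃ₗᵢ[ℝ] E) {a x : E}
    (hf : ContDiffAt ℝ 2 f (a + L x)) : Δ (fun y => f (a + L y)) x = Δ f (a + L x) := by
  have hcomp : ContDiffAt ℝ 2 (fun y => f (a + L y)) x :=
    hf.comp x (by fun_prop)
  rw [laplacian_eq_sum_deriv_deriv hcomp (stdOrthonormalBasis ℝ E),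
    laplacian_eq_sum_deriv_deriv hf ((stdOrthonormalBasis ℝ E).map L)]
  simp only [map_add, map_smul, add_assoc, OrthonormalBasis.map_apply]

theorem harmonicAt_comp_add_linearIsometryEquiv {f : E → F} (L : E ≃ₗᵢ[ℝ] E) {a x : E}
    (hf : HarmonicAt f (a + L x)) : HarmonicAt (fun y => f (a + L y)) x := by
  have hcont : ContinuousAt (fun y => a + L y) x := by fun_prop
  refine ⟨hf.1.comp x (by fun_prop), ?_⟩
  filter_upwards [hcont.eventually hf.eventually] with y hy
  rw [laplacian_comp_add_linearIsometryEquiv L hy.1, hy.2.self_of_nhds]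
  rfl

theorem exists_mem_frontier_isMaxOn_of_laplacian_pos {f : E → ℝ} {K : Set E} (hK : IsCompact K)
    (hne : K.Nonempty) (hcont : ContinuousOn f K)
    (hf : ∀ x ∈ interior K, ContDiffAt ℝ 2 f x ∧ 0 < Δ f x) :
    ∃ x ∈ frontier K, IsMaxOn f K x := by
  obtain ⟨x, hxK, hmax⟩ := hK.exists_isMaxOn hne hcont
  refine ⟨x, ⟨subset_closure hxK, fun hint => ?_⟩, hmax⟩
  have hlocal : IsLocalMax f x := hmax.isLocalMax (mem_interior_iff_mem_nhds.1 hint)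
  exact (laplacian_nonpos_of_isLocalMax hlocal (hf x hint).1).not_gt (hf x hint).2

-- `f + ε‖·‖²` has positive Laplacian; let `ε → 0`.
theorem le_of_laplacian_nonneg_of_le_on_frontier [Nontrivial E] {f : E → ℝ} {K : Set E} {c : ℝ}
    (hK : IsCompact K) (hcont : ContinuousOn f K)
    (hf : ∀ x ∈ interior K, ContDiffAt ℝ 2 f x ∧ 0 ≤ Δ f x) (hc : ∀ x ∈ frontier K, f x ≤ c)
    {x : E} (hx : x ∈ K) : f x ≤ c := by
  obtain ⟨R, hR⟩ := hK.isBounded.exists_norm_le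
  have hn : (0 : ℝ) < Module.finrank ℝ E := by exact_mod_cast Module.finrank_pos
  have hperturbed : ∀ ε > 0, f x ≤ c + ε * R ^ 2 := fun ε hε => by
    set q : E → ℝ := fun y => ε * ‖y‖ ^ 2
    have hq : ContDiff ℝ 2 q := contDiff_const.mul (contDiff_norm_sq ℝ)
    have hΔq : ∀ y, Δ q y = 2 * (ε * Module.finrank ℝ E) := fun y => by
      simpa using laplacian_norm_sq_add_inner_sq_add_inner ε 0 0 0 y
    obtain ⟨z, hz, hmax⟩ := exists_mem_frontier_isMaxOn_of_laplacian_pos hK ⟨x, hx⟩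
      (hcont.add hq.continuous.continuousOn) fun y hy => by
        refine ⟨(hf y hy).1.add hq.contDiffAt, ?_⟩
        rw [(hf y hy).1.laplacian_add hq.contDiffAt, hΔq]
        have := (hf y hy).2
        positivity
    have hzR : ‖z‖ ≤ R := hR z (hK.isClosed.frontier_subset hz)
    calc f x ≤ f x + ε * ‖x‖ ^ 2 := le_add_of_nonneg_right (by positivity)
      _ ≤ f z + ε * ‖z‖ ^ 2 := hmax hx
      _ ≤ c + ε * R ^ 2 := by gcongr; exact hc z hz
  have htendsto : Tendsto (fun ε : ℝ => c + ε * R ^ 2) (𝓝[>] 0) (𝓝 (c + 0 * R ^ 2)) :=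
    ((continuous_const.add (continuous_id.mul continuous_const)).tendsto 0).mono_left
      nhdsWithin_le_nhds
  simpa using ge_of_tendsto htendsto (eventually_mem_nhdsWithin.mono hperturbed)

end Laplacian

section HalfBall

variable {E : Type*} [NormedAddCommGroup E] [InnerProductSpace ℝ E] {d : ℝ} {e p : E}

/-- The barrier of the interior gradient estimate, a quadratic polynomial which is harmonic when
`‖e‖ = 1`. On the half ball `{‖p‖ ≤ d, 0 ≤ ⟪e, p⟫}` it is nonnegative, and it is at least `d ^ 2`
on the spherical part of the boundary. -/
def halfBallBarrier (d : ℝ) (e p : E) : ℝ :=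
  ‖p‖ ^ 2 + Module.finrank ℝ E * ⟪e, p⟫ * (d - ⟪e, p⟫)

theorem halfBallBarrier_eq (d : ℝ) (e : E) :
    halfBallBarrier d e = fun p : E => 1 * ‖p‖ ^ 2 + -(Module.finrank ℝ E : ℝ) * ⟪e, p⟫ ^ 2 +
      Module.finrank ℝ E * d * ⟪e, p⟫ := by
  funext p
  rw [halfBallBarrier]
  ring

theorem contDiff_halfBallBarrier (d : ℝ) (e : E) : ContDiff ℝ 2 (halfBallBarrier d e) := by
  rw [halfBallBarrier_eq]
  exact contDiff_norm_sq_add_inner_sq_add_inner _ _ _ e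

theorem norm_sq_le_halfBallBarrier (he : ‖e‖ = 1) (hep : 0 ≤ ⟪e, p⟫) (hp : ‖p‖ ≤ d) :
    ‖p‖ ^ 2 ≤ halfBallBarrier d e p := by
  have hle : ⟪e, p⟫ ≤ ‖p‖ := by simpa [he] using real_inner_le_norm e p
  have : 0 ≤ d - ⟪e, p⟫ := by linarith
  exact le_add_of_nonneg_right (by positivity)

theorem halfBallBarrier_smul_self (d t : ℝ) (he : ‖e‖ = 1) :
    halfBallBarrier d e (t • e) = t * (t + Module.finrank ℝ E * (d - t)) := by
  have hnorm : ‖t • e‖ ^ 2 = t ^ 2 := by rw [norm_smul, he, mul_one, Real.norm_eq_abs, sq_abs]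
  have hinner : ⟪e, t • e⟫ = t := by simp [inner_smul_right, he]
  rw [halfBallBarrier, hnorm, hinner]
  ring

theorem isClosed_setOf_zero_le_inner (e : E) : IsClosed {q : E | 0 ≤ ⟪e, q⟫} :=
  isClosed_le continuous_const (by fun_prop)

theorem norm_eq_or_inner_eq_zero_of_mem_frontier_halfBall
    (hp : p ∈ frontier (closedBall 0 d ∩ {q : E | 0 ≤ ⟪e, q⟫})) : ‖p‖ = d ∨ ⟪e, p⟫ = 0 := by
  have hpK := (isClosed_closedBall.inter (isClosed_setOf_zero_le_inner e)).frontier_subset hp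
  by_contra! hne
  have hopen : IsOpen (ball 0 d ∩ {q : E | 0 < ⟪e, q⟫}) :=
    isOpen_ball.inter (isOpen_lt continuous_const (by fun_prop))
  refine hp.2 (interior_maximal (inter_subset_inter ball_subset_closedBall ?_) hopen
    ⟨?_, hpK.2.lt_of_ne' hne.2⟩)
  · exact fun q (hq : 0 < ⟪e, q⟫) => hq.le
  · exact mem_ball_zero_iff.2 ((mem_closedBall_zero_iff.1 hpK.1).lt_of_ne hne.1)

variable [FiniteDimensional ℝ E]

theorem laplacian_halfBallBarrier (d : ℝ) (he : ‖e‖ = 1) (p : E) :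
    Δ (halfBallBarrier d e) p = 0 := by
  rw [halfBallBarrier_eq, laplacian_norm_sq_add_inner_sq_add_inner, he]
  ring

theorem le_mul_halfBallBarrier_of_harmonicContOnCl {v : E → ℝ} {A : ℝ} (hd : 0 < d)
    (he : ‖e‖ = 1) (hv : HarmonicContOnCl v (ball 0 d)) (hA : ∀ q ∈ closedBall 0 d, v q ≤ A)
    (hzero : ∀ q, ⟪e, q⟫ = 0 → v q = 0) (hp : p ∈ closedBall 0 d) (hep : 0 ≤ ⟪e, p⟫) :
    v p ≤ A / d ^ 2 * halfBallBarrier d e p := by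
  have : Nontrivial E := nontrivial_of_ne e 0 (norm_ne_zero_iff.1 (by simp [he]))
  have hK : IsCompact (closedBall 0 d ∩ {q : E | 0 ≤ ⟪e, q⟫}) :=
    (isCompact_closedBall 0 d).inter_right (isClosed_setOf_zero_le_inner e)
  have hA0 : 0 ≤ A := (hzero 0 (inner_zero_right e)).ge.trans (hA 0 (mem_closedBall_self hd.le))
  have hb := contDiff_halfBallBarrier d e
  have hcb : ContDiff ℝ 2 ((A / d ^ 2) • halfBallBarrier d e) := contDiff_const.smul hb
  refine sub_nonpos.1 (le_of_laplacian_nonneg_of_le_on_frontier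
    (f := v - (A / d ^ 2) • halfBallBarrier d e) hK ?_ (fun q hq => ?_) (fun q hq => ?_) ⟨hp, hep⟩)
  · exact (hv.continuousOn_ball.mono inter_subset_left).sub hcb.continuous.continuousOn
  · have hq' : q ∈ ball 0 d := by
      simpa only [interior_closedBall _ hd.ne'] using interior_mono inter_subset_left hq
    have hvq := hv.harmonicOnNhd q hq'
    refine ⟨hvq.1.sub hcb.contDiffAt, ?_⟩
    rw [hvq.1.laplacian_sub hcb.contDiffAt, laplacian_smul _ hb.contDiffAt,
      laplacian_halfBallBarrier d he, hvq.2.self_of_nhds]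
    simp
  · have hqK := hK.isClosed.frontier_subset hq
    have hbarrier := norm_sq_le_halfBallBarrier he hqK.2 (mem_closedBall_zero_iff.1 hqK.1)
    refine sub_nonpos.2 ?_
    rcases norm_eq_or_inner_eq_zero_of_mem_frontier_halfBall hq with hsphere | hplane
    · calc v q ≤ A := hA q hqK.1
        _ = A / d ^ 2 * ‖q‖ ^ 2 := by rw [hsphere]; field_simp
        _ ≤ A / d ^ 2 * halfBallBarrier d e q := by gcongr
    · rw [hzero q hplane]
      exact mul_nonneg (by positivity) ((sq_nonneg _).trans hbarrier)

end HalfBall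

section GradientEstimate

variable {E : Type*} [NormedAddCommGroup E] [InnerProductSpace ℝ E] [FiniteDimensional ℝ E]

theorem harmonicContOnCl_ball_comp_add_linearIsometryEquiv {u : E → ℝ} {x : E} {d : ℝ}
    (hu : HarmonicContOnCl u (ball x d)) (L : E ≃ₗᵢ[ℝ] E) :
    HarmonicContOnCl (fun p => u (x + L p)) (ball 0 d) := by
  have hball : ∀ p ∈ ball 0 d, x + L p ∈ ball x d := fun p hp => by simpa using hp
  have hclosed : ∀ p ∈ closedBall 0 d, x + L p ∈ closedBall x d := fun p hp => by simpa using hp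
  exact .mk_ball
    (fun p hp => harmonicAt_comp_add_linearIsometryEquiv L (hu.harmonicOnNhd _ (hball p hp)))
    (hu.continuousOn_ball.comp (by fun_prop) hclosed)

-- The difference between `u` and its reflection across the hyperplane `eᗮ` through `x` is harmonic
-- and vanishes on that hyperplane, so the barrier applies to it.
theorem sub_le_mul_halfBallBarrier {u : E → ℝ} {x : E} {d A : ℝ} (hd : 0 < d)
    (hu : HarmonicContOnCl u (ball x d))
    (hA : ∀ y ∈ closedBall x d, ∀ z ∈ closedBall x d, u y - u z ≤ A)
    {e : E} (he : ‖e‖ = 1) {t : ℝ} (ht : t ∈ Icc 0 d) :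
    u (x + t • e) - u (x - t • e) ≤ A / d ^ 2 * halfBallBarrier d e (t • e) := by
  set R := (ℝ ∙ e)ᗮ.reflection
  have hRe : R e = -e := Submodule.reflection_orthogonalComplement_singleton_eq_neg e
  have hodd : HarmonicContOnCl (fun p => u (x + p) - u (x + R p)) (ball 0 d) :=
    (harmonicContOnCl_ball_comp_add_linearIsometryEquiv hu (.refl ℝ E)).fun_sub
      (harmonicContOnCl_ball_comp_add_linearIsometryEquiv hu R)
  have hosc : ∀ p ∈ closedBall 0 d, u (x + p) - u (x + R p) ≤ A := fun p hp =>
    hA _ (by simpa using hp) _ (by simpa using hp)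
  have hplane : ∀ p, ⟪e, p⟫ = 0 → u (x + p) - u (x + R p) = 0 := fun p hp => by
    rw [Submodule.reflection_mem_subspace_eq_self
      (Submodule.mem_orthogonal_singleton_iff_inner_right.2 hp), sub_self]
  have hte : t • e ∈ closedBall 0 d := by
    simpa [norm_smul, he, abs_of_nonneg ht.1] using ht.2
  have hinner : 0 ≤ ⟪e, t • e⟫ := by simpa [inner_smul_right, he] using ht.1
  simpa [hRe, sub_eq_add_neg] using
    le_mul_halfBallBarrier_of_harmonicContOnCl hd he hodd hosc hplane hte hinner

theorem fderiv_apply_le_of_harmonicContOnCl_ball {u : E → ℝ} {x : E} {d A : ℝ} (hd : 0 < d)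
    (hu : HarmonicContOnCl u (ball x d))
    (hA : ∀ y ∈ closedBall x d, ∀ z ∈ closedBall x d, u y - u z ≤ A) {e : E} (he : ‖e‖ = 1) :
    fderiv ℝ u x e ≤ Module.finrank ℝ E * A / (2 * d) := by
  have hdiff := hu.differentiableAt (mem_ball_self hd)
  have hderiv : HasDerivAt (fun t : ℝ => u (x + t • e) - u (x + t • -e))
      (fderiv ℝ u x e - fderiv ℝ u x (-e)) 0 := by
    have h (v : E) : HasDerivAt (fun t : ℝ => u (x + t • v)) (fderiv ℝ u x v) 0 := by
      simpa using hasDerivAt_comp_add_smul (f := u) (x := x) (v := v) (s := 0) (by simpa)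
    exact (h e).fun_sub (h (-e))
  let g : ℝ → ℝ := fun t => A / d ^ 2 * (t + Module.finrank ℝ E * (d - t))
  have hg : Continuous g := by fun_prop
  have htwice : fderiv ℝ u x e - fderiv ℝ u x (-e) ≤ g 0 := by
    refine le_of_hasDerivWithinAt_of_eventually_sub_le hderiv.hasDerivWithinAt
      hg.continuousWithinAt ?_
    filter_upwards [Ioc_mem_nhdsGT hd] with t ht
    have h := sub_le_mul_halfBallBarrier hd hu hA he ⟨ht.1.le, ht.2⟩
    rw [halfBallBarrier_smul_self d t he] at h
    simpa [g, ← sub_eq_add_neg, mul_left_comm] using h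
  calc fderiv ℝ u x e = (fderiv ℝ u x e - fderiv ℝ u x (-e)) / 2 := by rw [map_neg]; ring
    _ ≤ g 0 / 2 := by gcongr
    _ = Module.finrank ℝ E * A / (2 * d) := by simp only [g]; field_simp; ring

theorem norm_fderiv_le_of_harmonicContOnCl_ball {u : E → ℝ} {x : E} {d A : ℝ} (hd : 0 < d)
    (hu : HarmonicContOnCl u (ball x d))
    (hA : ∀ y ∈ closedBall x d, ∀ z ∈ closedBall x d, u y - u z ≤ A) :
    ‖fderiv ℝ u x‖ ≤ Module.finrank ℝ E * A / (2 * d) := by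
  have hx := mem_closedBall_self (x := x) hd.le
  have hA0 : 0 ≤ A := (sub_self (u x)).ge.trans (hA x hx x hx)
  refine ContinuousLinearMap.opNorm_le_of_unit_norm (by positivity) fun e he => abs_le.2 ⟨?_, ?_⟩
  · have h := fderiv_apply_le_of_harmonicContOnCl_ball hd hu hA (norm_neg e ▸ he)
    rw [map_neg] at h
    exact neg_le.1 h
  · exact fderiv_apply_le_of_harmonicContOnCl_ball hd hu hA he

end GradientEstimate

section Frontier

variable {E : Type*} [NormedAddCommGroup E] [NormedSpace ℝ E] {Ω : Set E}

theorem frontier_nonempty_of_isBounded [Nontrivial E] (hbdd : Bornology.IsBounded Ω)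
    (hne : Ω.Nonempty) : (frontier Ω).Nonempty :=
  nonempty_frontier_iff.2 ⟨hne, fun h => NormedSpace.unbounded_univ ℝ E (h ▸ hbdd)⟩

theorem infDist_frontier_pos {X : Type*} [PseudoMetricSpace X] {Ω : Set X} (hΩ : IsOpen Ω)
    (hne : (frontier Ω).Nonempty) {x : X} (hx : x ∈ Ω) : 0 < infDist x (frontier Ω) :=
  (isClosed_frontier.notMem_iff_infDist_pos hne).1
    fun hxf => (hΩ.inter_frontier_eq.subset ⟨hx, hxf⟩).elim

theorem ball_infDist_frontier_subset (hΩ : IsOpen Ω) {x : E} (hx : x ∈ Ω) :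
    ball x (infDist x (frontier Ω)) ⊆ Ω := by
  rcases (infDist_nonneg (x := x) (s := frontier Ω)).eq_or_lt with hzero | hpos
  · simp [← hzero]
  refine isPreconnected_ball.subset_left_of_subset_union hΩ isClosed_closure.isOpen_compl
    (disjoint_compl_right.mono_left subset_closure) (fun y hy => ?_) ⟨x, mem_ball_self hpos, hx⟩
  by_contra! hnot
  simp only [mem_union, mem_compl_iff, not_or, not_not] at hnot
  exact ball_infDist_subset_compl hy (hΩ.frontier_eq ▸ ⟨hnot.2, hnot.1⟩)

theorem closedBall_subset_of_lt_infDist_frontier (hΩ : IsOpen Ω) {x : E} (hx : x ∈ Ω) {ρ : ℝ}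
    (hρ : ρ < infDist x (frontier Ω)) : closedBall x ρ ⊆ Ω :=
  (closedBall_subset_ball hρ).trans (ball_infDist_frontier_subset hΩ hx)

theorem le_infDist_frontier_of_ball_subset {X : Type*} [PseudoMetricSpace X] {Ω : Set X}
    (hΩ : IsOpen Ω) (hne : (frontier Ω).Nonempty) {x : X} {ρ : ℝ} (h : ball x ρ ⊆ Ω) :
    ρ ≤ infDist x (frontier Ω) := by
  refine (le_infDist hne).2 fun y hy => ?_
  by_contra! hlt
  exact hΩ.inter_frontier_eq.subset ⟨h (mem_ball'.2 hlt), hy⟩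

end Frontier

section InteriorCone

variable {E : Type*} [NormedAddCommGroup E] [NormedSpace ℝ E] {Ω : Set E}

/-- The unit vector `v` points into `Ω` near `p`: from every point of `Ω` within `ε` of `p`, a cone
of axis `v`, height `ε` and opening `κ` stays in `Ω`. -/
def IsInwardDirection (Ω : Set E) (κ ε : ℝ) (p v : E) : Prop :=
  ‖v‖ = 1 ∧ ∀ x ∈ Ω, dist x p < ε → ∀ t, 0 < t → t < ε → ball (x + t • v) (κ * t) ⊆ Ω

/-- The interior cone condition in the form needed near the boundary: opening and height of the
cones are the same at all boundary points. -/
def UniformInteriorCone (Ω : Set E) : Prop :=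
  ∃ κ ∈ Ioc (0 : ℝ) 1, ∃ ε > 0, ∀ p ∈ frontier Ω, ∃ v, IsInwardDirection Ω κ ε p v

theorem IsInwardDirection.mono {κ κ' ε ε' : ℝ} {p q v : E} (h : IsInwardDirection Ω κ ε p v)
    (hκ : κ' ≤ κ) (hε : ε' + dist q p ≤ ε) : IsInwardDirection Ω κ' ε' q v := by
  refine ⟨h.1, fun x hx hxq t ht htε => ?_⟩
  have hxp : dist x p < ε := (dist_triangle x q p).trans_lt (by linarith)
  have htε' : t < ε := by linarith [dist_nonneg (x := q) (y := p)]
  exact (ball_subset_ball (by gcongr)).trans (h.2 x hx hxp t ht htε')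

theorem exists_norm_eq_one_apply_neg {f : E →L[ℝ] ℝ} (hf : f ≠ 0) : ∃ v, ‖v‖ = 1 ∧ f v < 0 := by
  obtain ⟨w, hw⟩ : ∃ w, f w < 0 := by
    obtain ⟨w, hw⟩ := DFunLike.ne_iff.1 hf
    rcases lt_or_gt_of_ne hw with hneg | hpos
    · exact ⟨w, hneg⟩
    · exact ⟨-w, by simpa using hpos⟩
  have hw0 : w ≠ 0 := by rintro rfl; simp at hw
  refine ⟨‖w‖⁻¹ • w, by simp [norm_smul, hw0], ?_⟩
  rw [map_smul, smul_eq_mul]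
  exact mul_neg_of_pos_of_neg (by positivity) hw

theorem dist_le_two_mul_of_mem_ball_add_smul {x y v : E} (hv : ‖v‖ = 1) {κ t : ℝ} (ht : 0 ≤ t)
    (hκ : κ ≤ 1) (hy : y ∈ ball (x + t • v) (κ * t)) : dist y x ≤ 2 * t := by
  have htv : dist (x + t • v) x = t := by
    rw [dist_self_add_left, norm_smul, hv, mul_one, Real.norm_of_nonneg ht]
  linarith [mem_ball.1 hy, dist_triangle y (x + t • v) x, mul_le_of_le_one_left ht hκ]

theorem eventually_le_add_of_hasStrictFDerivAt {r : E → ℝ} {r' : E →L[ℝ] ℝ} {p : E}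
    (hr : HasStrictFDerivAt r r' p) {c : ℝ} (hc : 0 < c) :
    ∀ᶠ q : E × E in 𝓝 (p, p), r q.1 ≤ r q.2 + r' (q.1 - q.2) + c * ‖q.1 - q.2‖ := by
  filter_upwards [hr.isLittleO.def hc] with q hq
  linarith [(le_abs_self _).trans hq]

theorem exists_forall_mem_ball_add_smul_lt_of_hasStrictFDerivAt {r : E → ℝ} {r' : E →L[ℝ] ℝ}
    {p v : E} (hr : HasStrictFDerivAt r r' p) (hv : ‖v‖ = 1) (hneg : r' v < 0) :
    ∃ κ ∈ Ioc (0 : ℝ) 1, ∃ ε > 0, ∀ x, dist x p < ε → ∀ t, 0 < t → t < ε →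
      ∀ y ∈ ball (x + t • v) (κ * t), r y < r x := by
  have hle : -r' v ≤ ‖r'‖ := by simpa [hv] using (neg_le_abs (r' v)).trans (r'.le_opNorm v)
  have hr' : 0 < ‖r'‖ := (neg_pos.2 hneg).trans_le hle
  set κ := -r' v / (4 * ‖r'‖)
  have hκ : κ ∈ Ioc (0 : ℝ) 1 :=
    ⟨div_pos (neg_pos.2 hneg) (by positivity), (div_le_one (by positivity)).2 (by linarith)⟩
  obtain ⟨η, hη, hball⟩ := Metric.eventually_nhds_iff.1
    (eventually_le_add_of_hasStrictFDerivAt hr (c := -r' v / 4) (by linarith))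
  refine ⟨κ, hκ, η / 3, by positivity, fun x hx t ht htη y hy => ?_⟩
  have hyx : dist y x ≤ 2 * t := dist_le_two_mul_of_mem_ball_add_smul hv ht.le hκ.2 hy
  have hyp : dist y p < η := (dist_triangle y x p).trans_lt (by linarith)
  have happrox : r y ≤ r x + r' (y - x) + -r' v / 4 * ‖y - x‖ :=
    hball (y := (y, x)) (max_lt hyp (by linarith))
  have hlin : r' (y - x) ≤ t * r' v + -r' v / 4 * t := calc
    r' (y - x) = t * r' v + r' (y - (x + t • v)) := by
      simp only [map_sub, map_add, map_smul, smul_eq_mul]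
      ring
    _ ≤ t * r' v + ‖r'‖ * ‖y - (x + t • v)‖ := by
      gcongr
      exact (le_abs_self _).trans (r'.le_opNorm _)
    _ ≤ t * r' v + ‖r'‖ * (κ * t) := by gcongr; exact (mem_ball_iff_norm.1 hy).le
    _ = t * r' v + -r' v / 4 * t := by simp only [κ]; field_simp
  rw [dist_eq_norm] at hyx
  nlinarith

theorem exists_isInwardDirection_of_hasStrictFDerivAt {r : E → ℝ} {r' : E →L[ℝ] ℝ} {p v : E}
    (hr : HasStrictFDerivAt r r' p) (hΩ : ∀ᶠ x in 𝓝 p, x ∈ Ω ↔ r x < 0) (hv : ‖v‖ = 1)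
    (hneg : r' v < 0) : ∃ κ ∈ Ioc (0 : ℝ) 1, ∃ ε > 0, IsInwardDirection Ω κ ε p v := by
  obtain ⟨κ, hκ, ε, hε, hdecr⟩ :=
    exists_forall_mem_ball_add_smul_lt_of_hasStrictFDerivAt hr hv hneg
  obtain ⟨η, hη, hball⟩ := Metric.eventually_nhds_iff.1 hΩ
  refine ⟨κ, hκ, min ε (η / 3), by positivity, hv, fun x hx hxp t ht htε y hy => ?_⟩
  rw [lt_min_iff] at hxp htε
  have hyx : dist y x ≤ 2 * t := dist_le_two_mul_of_mem_ball_add_smul hv ht.le hκ.2 hy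
  have hyp : dist y p < η := (dist_triangle y x p).trans_lt (by linarith)
  exact (hball hyp).2 ((hdecr x hxp.1 t ht htε.1 y hy).trans ((hball (by linarith)).1 hx))

theorem uniformInteriorCone_of_isCompact_frontier (hcomp : IsCompact (frontier Ω))
    (hlocal : ∀ p ∈ frontier Ω, ∃ κ ∈ Ioc (0 : ℝ) 1, ∃ ε > 0, ∃ v, IsInwardDirection Ω κ ε p v) :
    UniformInteriorCone Ω := by
  refine hcomp.induction_on (p := fun S => ∃ κ ∈ Ioc (0 : ℝ) 1, ∃ ε > 0, ∀ p ∈ S, ∃ v,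
    IsInwardDirection Ω κ ε p v) ⟨1, by simp, 1, one_pos, by simp⟩ ?_ ?_ fun p hp => ?_
  · rintro S T hST ⟨κ, hκ, ε, hε, h⟩
    exact ⟨κ, hκ, ε, hε, fun p hp => h p (hST hp)⟩
  · rintro S T ⟨κ₁, hκ₁, ε₁, hε₁, h₁⟩ ⟨κ₂, hκ₂, ε₂, hε₂, h₂⟩
    refine ⟨min κ₁ κ₂, ⟨lt_min hκ₁.1 hκ₂.1, (min_le_left _ _).trans hκ₁.2⟩, min ε₁ ε₂,
      lt_min hε₁ hε₂, ?_⟩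
    rintro p (hp | hp)
    · exact (h₁ p hp).imp fun v hv => hv.mono (min_le_left _ _) (by simp)
    · exact (h₂ p hp).imp fun v hv => hv.mono (min_le_right _ _) (by simp)
  · obtain ⟨κ, hκ, ε, hε, v, hv⟩ := hlocal p hp
    refine ⟨ball p (ε / 2), mem_nhdsWithin_of_mem_nhds (ball_mem_nhds p (half_pos hε)), κ, hκ,
      ε / 2, half_pos hε, fun q hq => ⟨v, hv.mono le_rfl ?_⟩⟩
    linarith [mem_ball.1 hq]

end InteriorCone

theorem HasSmoothBoundary.uniformInteriorCone {n : ℕ} {Ω : Set (En n)} (hΩ : HasSmoothBoundary Ω)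
    (hbdd : Bornology.IsBounded Ω) : UniformInteriorCone Ω := by
  obtain ⟨U, r, hU, hfU, hr, hrΩ, hgrad⟩ := hΩ
  have hcomp : IsCompact (frontier Ω) :=
    hbdd.isCompact_closure.of_isClosed_subset isClosed_frontier frontier_subset_closure
  refine uniformInteriorCone_of_isCompact_frontier hcomp fun p hp => ?_
  have hUp := hU.mem_nhds (hfU hp)
  have hstrict : HasStrictFDerivAt r (fderiv ℝ r p) p :=
    (hr.contDiffAt hUp).hasStrictFDerivAt (by simp)
  have hne : fderiv ℝ r p ≠ 0 := fun h => hgrad p hp (by simp [gradient, h])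
  obtain ⟨v, hv, hneg⟩ := exists_norm_eq_one_apply_neg hne
  obtain ⟨κ, hκ, ε, hε, h⟩ := exists_isInwardDirection_of_hasStrictFDerivAt hstrict
    (eventually_of_mem hUp hrΩ) hv hneg
  exact ⟨κ, hκ, ε, hε, v, h⟩

section Majorant

variable {B : ℝ → ℝ}

theorem Majorant.nonneg (hB : Majorant B) {t : ℝ} (ht : 0 ≤ t) : 0 ≤ B t :=
  hB.2.1 t ht

theorem Majorant.map_zero (hB : Majorant B) : B 0 = 0 :=
  hB.2.2.1

theorem Majorant.mono (hB : Majorant B) {s t : ℝ} (hs : 0 ≤ s) (hst : s ≤ t) : B s ≤ B t :=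
  hB.2.2.2.1 s t hs hst

theorem Majorant.div_anti (hB : Majorant B) {s t : ℝ} (hs : 0 < s) (hst : s ≤ t) :
    B t / t ≤ B s / s :=
  hB.2.2.2.2 s t hs hst

theorem Majorant.map_mul_le (hB : Majorant B) {k s : ℝ} (hk : 1 ≤ k) (hs : 0 < s) :
    B (k * s) ≤ k * B s := by
  have h := hB.div_anti hs (le_mul_of_one_le_left hs.le hk)
  rw [div_le_div_iff₀ (by positivity) hs] at h
  nlinarith

theorem Majorant.eq_zero_of_eq_zero (hB : Majorant B) {s : ℝ} (hs : 0 < s) (hBs : B s = 0)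
    {t : ℝ} (ht : 0 ≤ t) : B t = 0 := by
  refine le_antisymm ?_ (hB.nonneg ht)
  rcases le_total t s with hts | hst
  · exact (hB.mono ht hts).trans_eq hBs
  · have h := hB.div_anti hs hst
    rw [hBs, zero_div, div_le_iff₀ (hs.trans_le hst), zero_mul] at h
    exact h

/-- The half of regularity that controls line integrals up to the boundary: `∫₀^δ B t / t dt` is at
most a multiple of `B δ` for small `δ`. -/
def DiniMajorant (B : ℝ → ℝ) : Prop :=
  Majorant B ∧ ∃ A > (0 : ℝ), ∃ δ₁ > (0 : ℝ), ∀ δ, 0 < δ → δ ≤ δ₁ →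
    ∫⁻ t in Ioc 0 δ, ENNReal.ofReal (B t / t) ≤ ENNReal.ofReal (A * B δ)

theorem RegularMajorant.diniMajorant (hB : RegularMajorant B) : DiniMajorant B := by
  obtain ⟨hmaj, A, hA, δ₁, hδ₁, hreg⟩ := hB
  exact ⟨hmaj, A, hA, δ₁, hδ₁, fun δ hδ hδ' => le_self_add.trans (hreg δ hδ hδ')⟩

theorem lipschitzB_of_forall_norm_sub_lt {E : Type*} [NormedAddCommGroup E] {Ω : Set E}
    {u : E → ℝ} (hB : Majorant B) {r L M : ℝ} (hr : 0 < r) (hBr : 0 < B r) (hL : 0 < L)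
    (hM : ∀ x ∈ Ω, |u x| ≤ M)
    (hlocal : ∀ x ∈ Ω, ∀ y ∈ Ω, ‖x - y‖ < r → |u x - u y| ≤ L * B ‖x - y‖) :
    LipschitzB B u Ω := by
  refine ⟨max L (2 * M / B r), lt_max_of_lt_left hL, fun x hx y hy => ?_⟩
  have hBxy : 0 ≤ B ‖x - y‖ := hB.nonneg (norm_nonneg _)
  rcases lt_or_ge ‖x - y‖ r with hlt | hge
  · exact (hlocal x hx y hy hlt).trans (by gcongr; exact le_max_left _ _)
  have hM0 : 0 ≤ M := (abs_nonneg _).trans (hM x hx)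
  calc |u x - u y| ≤ |u x| + |u y| := abs_sub _ _
    _ ≤ 2 * M / B r * B r := by
      rw [div_mul_cancel₀ _ hBr.ne']
      linarith [hM x hx, hM y hy]
    _ ≤ 2 * M / B r * B ‖x - y‖ := by
      gcongr
      exact hB.mono hr.le hge
    _ ≤ max L (2 * M / B r) * B ‖x - y‖ := by
      gcongr
      exact le_max_right _ _

end Majorant

section GrowthToLipschitz

variable {E : Type*} [NormedAddCommGroup E] [NormedSpace ℝ E] {Ω : Set E} {B : ℝ → ℝ}
  {u : E → ℝ} {C : ℝ}

/-- The growth condition `‖∇u‖ ≤ C · B(δ) / δ` on `Ω`, where `δ` is the distance to `frontier Ω`;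
the Fréchet derivative replaces the gradient, so that no inner product is needed. -/
def FDerivGrowth (C : ℝ) (B : ℝ → ℝ) (u : E → ℝ) (Ω : Set E) : Prop :=
  ∀ x ∈ Ω, ‖fderiv ℝ u x‖ ≤ C * B (infDist x (frontier Ω)) / infDist x (frontier Ω)

theorem FDerivGrowth.norm_fderiv_le (h : FDerivGrowth C B u Ω) (hC : 0 ≤ C) (hB : Majorant B)
    {x : E} (hx : x ∈ Ω) {s : ℝ} (hs : 0 < s) (hsx : s ≤ infDist x (frontier Ω)) :
    ‖fderiv ℝ u x‖ ≤ C * (B s / s) := by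
  refine (h x hx).trans ?_
  rw [mul_div_assoc]
  gcongr C * ?_
  exact hB.div_anti hs hsx

theorem FDerivGrowth.abs_sub_le_of_two_mul_norm_sub_le (h : FDerivGrowth C B u Ω) (hC : 0 ≤ C)
    (hB : Majorant B) (hΩ : IsOpen Ω) (hu : DifferentiableOn ℝ u Ω) {x y : E}
    (hx : x ∈ Ω) (hxy : 2 * ‖x - y‖ ≤ infDist x (frontier Ω)) :
    |u x - u y| ≤ C * B ‖x - y‖ := by
  rcases (norm_nonneg (x - y)).eq_or_lt' with hzero | hpos
  · simp [sub_eq_zero.1 (norm_eq_zero.1 hzero), hB.map_zero]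
  set s := ‖x - y‖
  have hsub : closedBall x s ⊆ Ω := closedBall_subset_of_lt_infDist_frontier hΩ hx (by linarith)
  have hbound : ∀ z ∈ closedBall x s, ‖fderiv ℝ u z‖ ≤ C * (B s / s) := fun z hz =>
    h.norm_fderiv_le hC hB (hsub hz) hpos <| by
      have := infDist_le_infDist_add_dist (x := x) (y := z) (s := frontier Ω)
      linarith [mem_closedBall'.1 hz]
  calc |u x - u y| ≤ C * (B s / s) * s :=
        (convex_closedBall x s).norm_image_sub_le_of_norm_fderiv_le
          (fun z hz => hu.differentiableAt (hΩ.mem_nhds (hsub hz))) hbound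
          (mem_closedBall_iff_norm'.2 le_rfl) (mem_closedBall_self hpos.le)
    _ = C * B s := by field_simp

theorem FDerivGrowth.enorm_deriv_comp_add_smul_le (h : FDerivGrowth C B u Ω) (hC : 0 ≤ C)
    (hB : Majorant B) {κ : ℝ} (hκ : κ ∈ Ioc (0 : ℝ) 1) {x v : E} (hv : ‖v‖ = 1) {t : ℝ}
    (ht : 0 < t) (hxt : x + t • v ∈ Ω) (hu : DifferentiableAt ℝ u (x + t • v))
    (hdist : κ * t ≤ infDist (x + t • v) (frontier Ω)) :
    ‖deriv (fun t : ℝ => u (x + t • v)) t‖ₑ ≤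
      ENNReal.ofReal (C / κ) * ENNReal.ofReal (B t / t) := by
  obtain ⟨hκ0, hκ1⟩ := hκ
  rw [(hasDerivAt_comp_add_smul hu).deriv, ← ENNReal.ofReal_mul (by positivity), ← ofReal_norm]
  refine ENNReal.ofReal_le_ofReal ?_
  calc ‖fderiv ℝ u (x + t • v) v‖ ≤ ‖fderiv ℝ u (x + t • v)‖ := by
        simpa [hv] using (fderiv ℝ u (x + t • v)).le_opNorm v
    _ ≤ C * (B (κ * t) / (κ * t)) := h.norm_fderiv_le hC hB hxt (by positivity) hdist
    _ ≤ C * (B t / (κ * t)) := by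
      gcongr
      exact hB.mono (by positivity) (mul_le_of_le_one_left ht.le hκ1)
    _ = C / κ * (B t / t) := by field_simp

theorem FDerivGrowth.abs_sub_le_of_ray (h : FDerivGrowth C B u Ω) (hC : 0 ≤ C) (hB : Majorant B)
    (hΩ : IsOpen Ω) (hu : ContDiffOn ℝ 1 u Ω) {κ : ℝ} (hκ : κ ∈ Ioc (0 : ℝ) 1) {x v : E}
    (hv : ‖v‖ = 1) {T A : ℝ} (hT : 0 ≤ T) (hA : 0 ≤ A)
    (hint : ∫⁻ t in Ioc 0 T, ENNReal.ofReal (B t / t) ≤ ENNReal.ofReal A) (hx : x ∈ Ω)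
    (hray : ∀ t ∈ Ioc 0 T, x + t • v ∈ Ω)
    (hdist : ∀ t ∈ Ioc 0 T, κ * t ≤ infDist (x + t • v) (frontier Ω)) :
    |u (x + T • v) - u x| ≤ C / κ * A := by
  have hκ0 := hκ.1
  have hray' : ∀ t ∈ Icc 0 T, x + t • v ∈ Ω := fun t ht => by
    rcases ht.1.eq_or_lt with rfl | hpos
    · simpa using hx
    · exact hray t ⟨hpos, ht.2⟩
  have hcont : ContDiffOn ℝ 1 (fun t : ℝ => u (x + t • v)) (Icc 0 T) :=
    hu.comp (by fun_prop) hray'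
  have hle : ‖u (x + T • v) - u x‖ₑ ≤ ENNReal.ofReal (C / κ * A) := calc
    ‖u (x + T • v) - u x‖ₑ ≤ ∫⁻ t in Icc 0 T, ‖deriv (fun t : ℝ => u (x + t • v)) t‖ₑ := by
      simpa using enorm_sub_le_lintegral_deriv_of_contDiffOn_Icc hcont hT
    _ = ∫⁻ t in Ioc 0 T, ‖deriv (fun t : ℝ => u (x + t • v)) t‖ₑ :=
      setLIntegral_congr Ioc_ae_eq_Icc.symm
    _ ≤ ∫⁻ t in Ioc 0 T, ENNReal.ofReal (C / κ) * ENNReal.ofReal (B t / t) :=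
      setLIntegral_mono' measurableSet_Ioc fun t ht =>
        h.enorm_deriv_comp_add_smul_le hC hB hκ hv ht.1 (hray t ht)
          ((hu.contDiffAt (hΩ.mem_nhds (hray t ht))).differentiableAt one_ne_zero) (hdist t ht)
    _ = ENNReal.ofReal (C / κ) * ∫⁻ t in Ioc 0 T, ENNReal.ofReal (B t / t) :=
      lintegral_const_mul' _ _ ENNReal.ofReal_ne_top
    _ ≤ ENNReal.ofReal (C / κ) * ENNReal.ofReal A := by gcongr
    _ = ENNReal.ofReal (C / κ * A) := (ENNReal.ofReal_mul (by positivity)).symm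
  rwa [← ofReal_norm, ENNReal.ofReal_le_ofReal_iff (by positivity)] at hle

theorem FDerivGrowth.abs_sub_le_of_isInwardDirection (h : FDerivGrowth C B u Ω) (hC : 0 ≤ C)
    (hB : Majorant B) (hΩ : IsOpen Ω) (hne : (frontier Ω).Nonempty) (hu : ContDiffOn ℝ 1 u Ω)
    {κ ε : ℝ} (hκ : κ ∈ Ioc (0 : ℝ) 1) {p v : E} (hv : IsInwardDirection Ω κ ε p v) {T A : ℝ}
    (hT : 0 ≤ T) (hTε : T < ε) (hA : 0 ≤ A)
    (hint : ∫⁻ t in Ioc 0 T, ENNReal.ofReal (B t / t) ≤ ENNReal.ofReal (A * B T)) {z : E}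
    (hz : z ∈ Ω) (hzp : dist z p < ε) :
    |u (z + T • v) - u z| ≤ C / κ * (A * B T) := by
  have hcone : ∀ t ∈ Ioc 0 T, ball (z + t • v) (κ * t) ⊆ Ω := fun t ht =>
    hv.2 z hz hzp t ht.1 (ht.2.trans_lt hTε)
  exact h.abs_sub_le_of_ray hC hB hΩ hu hκ hv.1 hT (mul_nonneg hA (hB.nonneg hT)) hint hz
    (fun t ht => hcone t ht (mem_ball_self (mul_pos hκ.1 ht.1)))
    fun t ht => le_infDist_frontier_of_ball_subset hΩ hne (hcone t ht)

-- To compare `u x` and `u y` close to the boundary, push both points into `Ω` by `T • v` with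
-- `T = 2 ‖x - y‖ / κ`: the pushed points are at distance at least `2 ‖x - y‖` from the boundary.
theorem FDerivGrowth.abs_sub_le_of_dist_lt (h : FDerivGrowth C B u Ω) (hC : 0 ≤ C)
    (hB : Majorant B) (hΩ : IsOpen Ω) (hne : (frontier Ω).Nonempty) (hu : ContDiffOn ℝ 1 u Ω)
    {κ ε : ℝ} (hκ : κ ∈ Ioc (0 : ℝ) 1) {p v : E} (hv : IsInwardDirection Ω κ ε p v) {A : ℝ}
    (hA : 0 ≤ A) {x y : E} (hxy : x ≠ y) (hx : x ∈ Ω) (hy : y ∈ Ω) (hxp : dist x p < ε)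
    (hyp : dist y p < ε) (hε : 2 / κ * ‖x - y‖ < ε)
    (hint : ∫⁻ t in Ioc 0 (2 / κ * ‖x - y‖), ENNReal.ofReal (B t / t) ≤
      ENNReal.ofReal (A * B (2 / κ * ‖x - y‖))) :
    |u x - u y| ≤ C * (1 + 4 * A / κ ^ 2) * B ‖x - y‖ := by
  have hκ0 := hκ.1
  have hs : 0 < ‖x - y‖ := norm_pos_iff.2 (sub_ne_zero.2 hxy)
  set s := ‖x - y‖
  set T := 2 / κ * s with hT
  have hT0 : 0 < T := by positivity
  have hBT : B T ≤ 2 / κ * B s := hB.map_mul_le ((one_le_div hκ0).2 (by linarith [hκ.2])) hs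
  have hray : ∀ z ∈ Ω, dist z p < ε → |u (z + T • v) - u z| ≤ C / κ * (A * (2 / κ * B s)) :=
    fun z hz hzp => (h.abs_sub_le_of_isInwardDirection hC hB hΩ hne hu hκ hv hT0.le hε hA hint
      hz hzp).trans (by gcongr)
  have hball : ball (x + T • v) (κ * T) ⊆ Ω := hv.2 x hx hxp T hT0 hε
  have hdist : 2 * s ≤ infDist (x + T • v) (frontier Ω) := by
    convert le_infDist_frontier_of_ball_subset hΩ hne hball using 1
    rw [hT]
    field_simp
  have hdiff : x + T • v - (y + T • v) = x - y := add_sub_add_right_eq_sub x y (T • v)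
  have hmid : |u (x + T • v) - u (y + T • v)| ≤ C * B s := by
    simpa only [hdiff] using h.abs_sub_le_of_two_mul_norm_sub_le hC hB hΩ
      (hu.differentiableOn one_ne_zero) (hball (mem_ball_self (by positivity)))
      (y := y + T • v) (by rwa [hdiff])
  have htri : |u x - u y| ≤
      |u (x + T • v) - u x| + |u (x + T • v) - u (y + T • v)| + |u (y + T • v) - u y| := by
    rw [abs_sub_comm (u (x + T • v)) (u x)]
    linarith [abs_sub_le (u x) (u (x + T • v)) (u y),
      abs_sub_le (u (x + T • v)) (u (y + T • v)) (u y)]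
  calc |u x - u y|
      ≤ C / κ * (A * (2 / κ * B s)) + C * B s + C / κ * (A * (2 / κ * B s)) :=
        htri.trans (add_le_add_three (hray x hx hxp) hmid (hray y hy hyp))
    _ = C * (1 + 4 * A / κ ^ 2) * B s := by ring

theorem FDerivGrowth.abs_sub_le_of_norm_sub_lt (h : FDerivGrowth C B u Ω) (hC : 0 ≤ C)
    (hB : Majorant B) (hΩ : IsOpen Ω) (hne : (frontier Ω).Nonempty) (hu : ContDiffOn ℝ 1 u Ω)
    {κ ε : ℝ} (hκ : κ ∈ Ioc (0 : ℝ) 1)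
    (hcone : ∀ p ∈ frontier Ω, ∃ v, IsInwardDirection Ω κ ε p v) {A δ₁ : ℝ} (hA : 0 ≤ A)
    (hint : ∀ δ, 0 < δ → δ ≤ δ₁ →
      ∫⁻ t in Ioc 0 δ, ENNReal.ofReal (B t / t) ≤ ENNReal.ofReal (A * B δ))
    {x y : E} (hx : x ∈ Ω) (hy : y ∈ Ω) (hxy : ‖x - y‖ < κ * min ε δ₁ / 3) :
    |u x - u y| ≤ C * (1 + 4 * A / κ ^ 2) * B ‖x - y‖ := by
  obtain ⟨hκ0, hκ1⟩ := hκ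
  have hBxy : 0 ≤ B ‖x - y‖ := hB.nonneg (norm_nonneg _)
  rcases eq_or_ne x y with rfl | hne'
  · simp [hB.map_zero]
  rcases le_or_gt (2 * ‖x - y‖) (infDist x (frontier Ω)) with hfar | hnear
  · calc |u x - u y| ≤ C * B ‖x - y‖ := h.abs_sub_le_of_two_mul_norm_sub_le hC hB hΩ
          (hu.differentiableOn one_ne_zero) hx hfar
      _ ≤ C * (1 + 4 * A / κ ^ 2) * B ‖x - y‖ := by
        gcongr
        exact le_mul_of_one_le_right hC (le_add_of_nonneg_right (by positivity))
  obtain ⟨p, hp, hxp⟩ := (infDist_lt_iff hne).1 hnear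
  obtain ⟨v, hv⟩ := hcone p hp
  have hpos : 0 < ‖x - y‖ := norm_pos_iff.2 (sub_ne_zero.2 hne')
  have hmin : 3 * ‖x - y‖ / κ < min ε δ₁ := by rw [div_lt_iff₀ hκ0]; linarith
  have hle : 3 * ‖x - y‖ ≤ 3 * ‖x - y‖ / κ := le_div_self (by positivity) hκ0 hκ1
  have hT : 2 / κ * ‖x - y‖ ≤ 3 * ‖x - y‖ / κ := by
    rw [div_mul_eq_mul_div]
    gcongr
    norm_num
  obtain ⟨hε, hδ₁⟩ := lt_min_iff.1 hmin
  have hyp : dist y p < 3 * ‖x - y‖ := by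
    linarith [dist_triangle_left y p x, dist_eq_norm x y]
  exact h.abs_sub_le_of_dist_lt hC hB hΩ hne hu ⟨hκ0, hκ1⟩ hv hA hne' hx hy (by linarith)
    (by linarith) (by linarith) (hint _ (by positivity) (by linarith))

theorem FDerivGrowth.eq_of_eq_zero (h : FDerivGrowth C B u Ω) (hB : Majorant B) (hΩ : IsOpen Ω)
    (hconn : IsPreconnected Ω) (hu : DifferentiableOn ℝ u Ω) {s : ℝ} (hs : 0 < s)
    (hBs : B s = 0) {x y : E} (hx : x ∈ Ω) (hy : y ∈ Ω) : u x = u y := by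
  refine hΩ.is_const_of_fderiv_eq_zero hconn hu (fun z hz => ?_) hx hy
  have hz' := h z hz
  rw [hB.eq_zero_of_eq_zero hs hBs infDist_nonneg, mul_zero, zero_div] at hz'
  exact norm_le_zero_iff.1 hz'

theorem FDerivGrowth.lipschitzB (h : FDerivGrowth C B u Ω) (hC : 0 < C) (hB : DiniMajorant B)
    (hΩ : IsOpen Ω) (hconn : IsPreconnected Ω) (hne : (frontier Ω).Nonempty)
    (hcone : UniformInteriorCone Ω) (hu : ContDiffOn ℝ 1 u Ω) (hbdd : ∃ M, ∀ x ∈ Ω, |u x| ≤ M) :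
    LipschitzB B u Ω := by
  obtain ⟨M, hM⟩ := hbdd
  obtain ⟨hB, A, hA, δ₁, hδ₁, hint⟩ := hB
  obtain ⟨κ, hκ, ε, hε, hcone⟩ := hcone
  have hκ0 := hκ.1
  have hr : 0 < κ * min ε δ₁ / 3 := by positivity
  rcases (hB.nonneg hr.le).eq_or_lt' with hzero | hpos
  · refine ⟨1, one_pos, fun x hx y hy => ?_⟩
    rw [h.eq_of_eq_zero hB hΩ hconn (hu.differentiableOn one_ne_zero) hr hzero hx hy, sub_self,
      abs_zero, one_mul]
    exact hB.nonneg (norm_nonneg _)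
  · exact lipschitzB_of_forall_norm_sub_lt hB hr hpos (by positivity) hM
      fun x hx y hy => h.abs_sub_le_of_norm_sub_lt hC.le hB hΩ hne hu hκ hcone hA.le hint hx hy

end GrowthToLipschitz

section LipschitzToGrowth

variable {E : Type*} [NormedAddCommGroup E] [InnerProductSpace ℝ E] [FiniteDimensional ℝ E]
  {Ω : Set E} {B : ℝ → ℝ} {u : E → ℝ}

theorem LipschitzB.exists_fderivGrowth (h : LipschitzB B u Ω) (hB : Majorant B) (hΩ : IsOpen Ω)
    (hne : (frontier Ω).Nonempty) (hu : HarmonicOnNhd u Ω) :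
    ∃ C > 0, FDerivGrowth C B u Ω := by
  obtain ⟨C, hC, hL⟩ := h
  refine ⟨(Module.finrank ℝ E + 1) * C, by positivity, fun x hx => ?_⟩
  set δ := infDist x (frontier Ω)
  have hδ : 0 < δ := infDist_frontier_pos hΩ hne hx
  have hBδ : 0 ≤ B δ := hB.nonneg hδ.le
  have hsub : closedBall x (δ / 2) ⊆ Ω :=
    closedBall_subset_of_lt_infDist_frontier hΩ hx (half_lt_self hδ)
  have hosc : ∀ y ∈ closedBall x (δ / 2), ∀ z ∈ closedBall x (δ / 2), u y - u z ≤ C * B δ :=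
    fun y hy z hz => by
      have hyz : ‖y - z‖ ≤ δ := by
        rw [← dist_eq_norm]
        linarith [dist_triangle_right y z x, mem_closedBall.1 hy, mem_closedBall.1 hz]
      calc u y - u z ≤ C * B ‖y - z‖ := (le_abs_self _).trans (hL y (hsub hy) z (hsub hz))
        _ ≤ C * B δ := by gcongr; exact hB.mono (norm_nonneg _) hyz
  have hharm : HarmonicContOnCl u (ball x (δ / 2)) := by
    refine (hu.mono ?_).harmonicContOnCl
    rwa [closure_ball x (half_pos hδ).ne']
  calc ‖fderiv ℝ u x‖ ≤ Module.finrank ℝ E * (C * B δ) / (2 * (δ / 2)) :=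
        norm_fderiv_le_of_harmonicContOnCl_ball (half_pos hδ) hharm hosc
    _ ≤ (Module.finrank ℝ E + 1) * C * B δ / δ := by
      rw [mul_div_cancel₀ δ two_ne_zero, ← mul_assoc]
      gcongr
      exact le_add_of_nonneg_right zero_le_one

end LipschitzToGrowth

theorem IsHarmonicOn.harmonicOnNhd {n : ℕ} {Ω : Set (En n)} {u : En n → ℝ}
    (hu : IsHarmonicOn u Ω) (hΩ : IsOpen Ω) : HarmonicOnNhd u Ω := by
  intro x hx
  refine ⟨hu.1.contDiffAt (hΩ.mem_nhds hx), eventually_of_mem (hΩ.mem_nhds hx) fun y hy => ?_⟩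
  have hu' := hu.1.contDiffAt (hΩ.mem_nhds hy)
  have hfderiv : DifferentiableAt ℝ (fderiv ℝ u) y :=
    (hu'.fderiv_right (m := 1) (by norm_num)).differentiableAt one_ne_zero
  simpa [laplacian_eq_iteratedFDeriv_orthonormalBasis u (EuclideanSpace.basisFun (Fin n) ℝ),
    iteratedFDeriv_two_apply, fderiv_clm_apply hfderiv] using hu.2 y hy

theorem lipschitzB_iff_gradient_bound_of_subsingleton {E : Type*} [NormedAddCommGroup E]
    [InnerProductSpace ℝ E] [CompleteSpace E] [Subsingleton E] {B : ℝ → ℝ}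
    (hB : Majorant B) (u : E → ℝ) (Ω : Set E) :
    LipschitzB B u Ω ↔ ∃ C > (0 : ℝ), ∀ x ∈ Ω,
      ‖gradient u x‖ ≤ C * B (infDist x (frontier Ω)) / infDist x (frontier Ω) := by
  refine iff_of_true ⟨1, one_pos, fun x _ y _ => ?_⟩ ⟨1, one_pos, fun x _ => ?_⟩
  · simp [Subsingleton.elim x y, hB.map_zero]
  · simp [Subsingleton.elim (gradient u x) 0]

theorem lipschitzB_iff_gradient_bound_general {E : Type*} [NormedAddCommGroup E]
    [InnerProductSpace ℝ E] [FiniteDimensional ℝ E] {Ω : Set E} (hΩ : IsOpen Ω)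
    (hconn : IsPreconnected Ω) (hne : (frontier Ω).Nonempty) (hcone : UniformInteriorCone Ω)
    {B : ℝ → ℝ} (hB : DiniMajorant B) {u : E → ℝ} (hu : HarmonicOnNhd u Ω)
    (hbdd : ∃ M : ℝ, ∀ x ∈ Ω, |u x| ≤ M) :
    LipschitzB B u Ω ↔ ∃ C > (0 : ℝ), ∀ x ∈ Ω,
      ‖gradient u x‖ ≤ C * B (infDist x (frontier Ω)) / infDist x (frontier Ω) := by
  have hu' : ContDiffOn ℝ 1 u Ω := fun x hx => (hu x hx).1.contDiffWithinAt.of_le one_le_two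
  have hgrad : ∀ x, ‖gradient u x‖ = ‖fderiv ℝ u x‖ := fun x => by simp [gradient]
  simp only [hgrad]
  exact ⟨fun h => h.exists_fderivGrowth hB.1 hΩ hne hu,
    fun ⟨_, hC, h⟩ => FDerivGrowth.lipschitzB h hC hB hΩ hconn hne hcone hu' hbdd⟩

/-- For a bounded harmonic function on a bounded smooth domain and a regular
majorant `B`, being Lipschitz-`B` is equivalent to the gradient growth bound
`‖∇u x‖ ≤ C * B (δ x) / δ x`. -/
theorem lipschitzB_iff_gradient_bound
    {n : ℕ} (Ω : Set (En n)) (hΩ_open : IsOpen Ω) (hΩ_conn : IsConnected Ω)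
    (hΩ_bdd : Bornology.IsBounded Ω) (hΩ_smooth : HasSmoothBoundary Ω)
    (B : ℝ → ℝ) (hB : RegularMajorant B)
    (u : En n → ℝ) (hu : IsHarmonicOn u Ω)
    (hu_bdd : ∃ M : ℝ, ∀ x ∈ Ω, |u x| ≤ M) :
    LipschitzB B u Ω ↔
      ∃ C > (0:ℝ), ∀ x ∈ Ω,
        ‖gradient u x‖ ≤ C * B (infDist x (frontier Ω)) / infDist x (frontier Ω) := by
  rcases subsingleton_or_nontrivial (En n) with _ | _
  · exact lipschitzB_iff_gradient_bound_of_subsingleton hB.1 u Ω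
  · exact lipschitzB_iff_gradient_bound_general hΩ_open hΩ_conn.isPreconnected
      (frontier_nonempty_of_isBounded hΩ_bdd hΩ_conn.nonempty)
      (hΩ_smooth.uniformInteriorCone hΩ_bdd) hB.diniMajorant (hu.harmonicOnNhd hΩ_open) hu_bdd
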